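/- Let n be a positive integer, and consider the polynomial ring over ℝ in variables x_e indexed by the nonempty subsets e of {1, …, n}, on which the symmetric group Sₙ acts by permuting the indices. Let Ẽ be a linear map from this polynomial ring to ℝ satisfying Ẽ[σ·p] = Ẽ[p] for every polynomial p and every σ ∈ Sₙ. Then for every polynomial g with indexdeg(g) ≤ n/2, there exist a finite family of pairs (I_t, g_t), where each I_t is a subset of {1, …, n} with |I_t| ≤ indexdeg(g) and each g_t is a polynomial, such that: (1) each g_t is invariant under every permutation of {1, …, n} fixing I_t pointwise; (2) indexdeg(g_t) ≤ indexdeg(g); (3) for every i ∈ I_t, Σ_{σ} σ·g_t = 0, where the sum is over all permutations σ of {1, …, n} fixing I_t ∖ {i} pointwise; and (4) Ẽ[g²] = Σ_t Ẽ[g_t²]. -/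

import Mathlib

open MvPolynomial Finset

/-- The index type: nonempty subsets of `{1,…,n}`. -/
abbrev VIdx (n : ℕ) := {e : Finset (Fin n) // e.Nonempty}

/-- The action of a permutation of `{1,…,n}` on the index set. -/
def permIdx {n : ℕ} (σ : Equiv.Perm (Fin n)) (e : VIdx n) : VIdx n :=
  ⟨e.1.image σ, e.2.image σ⟩

/-- The index degree of a polynomial in the variables `x_e`, `e` a nonempty subset of
`{1,…,n}`: the maximum, over monomials in the support, of the number of indices
belonging to some `e` with `x_e` occurring with nonzero exponent. -/
noncomputable def indexDeg {n : ℕ} (p : MvPolynomial (VIdx n) ℝ) : ℕ :=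
  p.support.sup fun d => (d.support.biUnion fun e => (e : Finset (Fin n))).card

/-!
Let `A_J` be the average over the pointwise stabilizer of `J` and let `T_m` be the sum of the `A_J`
over the `m`-element sets `J`. The operators `T_m` commute with the group and hence with each other,
and they are self-adjoint for every invariant bilinear form `B`, so their joint eigenvectors for
distinct eigenvalues are orthogonal for every such `B`, definite or not. For a nonzero joint
eigenvector `v`, take the least `m` such that `A_J v ≠ 0` for some `J` of size `m`. Evaluating
`⟪T_m v, v⟫ = ∑ J, ‖A_J v‖²` in an invariant inner product shows that the eigenvalue `χ` of `T_m` is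
positive, so `B v v = χ⁻¹ ∑ J, B (A_J v) (A_J v)` is a sum of values of `B` at the rescaled vectors
`A_J v`, and all averages of these over stabilizers of smaller sets vanish.

An arbitrary vector is the image of a vector of the regular representation, which has an invariant
inner product, under its orbit map. For polynomials, `A_K` preserves the coefficient of every
monomial with index set `K`; hence a nonzero polynomial killed by `A_K` for all `|K| < j` has index
degree at least `j`.
-/

lemma apply_eq_zero_of_mem_eigenspace {k V W : Type*} [Field k] [AddCommGroup V] [Module k V]
    [AddCommGroup W] [Module k W] {B : V →ₗ[k] V →ₗ[k] W} {T : Module.End k V}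
    (hT : B.IsSelfAdjoint T) {a b : k} (hab : a ≠ b) {v w : V} (hv : v ∈ T.eigenspace a)
    (hw : w ∈ T.eigenspace b) : B v w = 0 := by
  rw [Module.End.mem_eigenspace_iff] at hv hw
  have scaled : (a - b) • B v w = 0 := by
    rw [sub_smul, ← map_smul (B v) b, ← hw, ← hT, hv, map_smul, LinearMap.smul_apply, sub_self]
  exact (smul_eq_zero.mp scaled).resolve_left (sub_ne_zero.mpr hab)

section SubgroupAverage

variable {k G V V' W : Type*} [Field k] [Group G] [Finite G]
  [AddCommGroup V] [Module k V] [AddCommGroup V'] [Module k V'] [AddCommGroup W] [Module k W]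

/-- The Reynolds operator of a subgroup `H`: the projection `|H|⁻¹ ∑ h ∈ H, ρ h` of a representation
of a finite group onto the vectors fixed by `H`. -/
noncomputable def subgroupAverage (ρ : Representation k G V) (H : Subgroup G) : Module.End k V :=
  letI := Fintype.ofFinite H
  (Nat.card H : k)⁻¹ • Representation.norm (ρ.comp H.subtype)

variable (ρ : Representation k G V) {H : Subgroup G}

lemma subgroupAverage_apply [Fintype H] (v : V) :
    subgroupAverage ρ H v = (Nat.card H : k)⁻¹ • ∑ h : H, ρ h v := by
  simp only [subgroupAverage, Representation.norm, LinearMap.smul_apply, LinearMap.sum_apply,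
    MonoidHom.comp_apply, Subgroup.subtype_apply]
  congr!

lemma card_smul_subgroupAverage [CharZero k] [Fintype H] (v : V) :
    (Nat.card H : k) • subgroupAverage ρ H v = ∑ h : H, ρ h v := by
  rw [subgroupAverage_apply, smul_inv_smul₀ (Nat.cast_ne_zero.mpr Nat.card_pos.ne')]

lemma apply_subgroupAverage {h : G} (hh : h ∈ H) (v : V) :
    ρ h (subgroupAverage ρ H v) = subgroupAverage ρ H v := by
  let := Fintype.ofFinite H
  rw [subgroupAverage, LinearMap.smul_apply, map_smul]
  exact congrArg _ (Representation.self_norm_apply (ρ.comp H.subtype) ⟨h, hh⟩ v)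

variable {ρ} in
lemma subgroupAverage_eq_self [CharZero k] {v : V} (hv : ∀ h ∈ H, ρ h v = v) :
    subgroupAverage ρ H v = v := by
  have := Fintype.ofFinite H
  rw [subgroupAverage_apply, sum_congr rfl fun (h : H) _ ↦ hv h h.2, sum_const, card_univ,
    ← Nat.cast_smul_eq_nsmul k, ← Nat.card_eq_fintype_card,
    inv_smul_smul₀ (Nat.cast_ne_zero.mpr Nat.card_pos.ne')]

lemma apply_subgroupAverage_conj (H : Subgroup G) (g : G) (v : V) :
    ρ g (subgroupAverage ρ H v) =
      subgroupAverage ρ (H.map (MulAut.conj g).toMonoidHom) (ρ g v) := by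
  have := Fintype.ofFinite H
  have := Fintype.ofFinite (H.map (MulAut.conj g).toMonoidHom)
  let e : H ≃* H.map (MulAut.conj g).toMonoidHom := (MulAut.conj g).subgroupMap H
  rw [subgroupAverage_apply, subgroupAverage_apply, ← Nat.card_congr e.toEquiv, map_smul, map_sum]
  refine congrArg _ (Fintype.sum_equiv e.toEquiv _ _ fun h ↦ ?_)
  have coe_e : (e.toEquiv h : G) = g * h * g⁻¹ := rfl
  rw [coe_e, ← Module.End.mul_apply, ← Module.End.mul_apply, ← map_mul, ← map_mul,
    inv_mul_cancel_right]

lemma map_subgroupAverage {ρ : Representation k G V} {τ : Representation k G V'}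
    (φ : ρ.IntertwiningMap τ) (H : Subgroup G) (v : V) :
    φ (subgroupAverage ρ H v) = subgroupAverage τ H (φ v) := by
  have := Fintype.ofFinite H
  simp [subgroupAverage_apply, map_smul, map_sum, φ.isIntertwining]

lemma isSelfAdjoint_subgroupAverage {ρ : Representation k G V} {B : V →ₗ[k] V →ₗ[k] W}
    (hB : ∀ g v w, B (ρ g v) (ρ g w) = B v w) (H : Subgroup G) :
    B.IsSelfAdjoint (subgroupAverage ρ H) := by
  have := Fintype.ofFinite H
  intro v w
  have adjoint (h : H) : B (ρ h v) w = B v (ρ ↑h⁻¹ w) := by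
    rw [← hB (h⁻¹ : H)]
    simp [← Module.End.mul_apply, ← map_mul]
  simp only [subgroupAverage_apply, map_smul, map_sum, LinearMap.smul_apply, LinearMap.sum_apply,
    adjoint]
  rw [← Equiv.sum_comp (Equiv.inv H) fun h ↦ B v (ρ h w)]
  rfl

lemma apply_subgroupAverage_self [CharZero k] {ρ : Representation k G V} {B : V →ₗ[k] V →ₗ[k] W}
    (hB : ∀ g v w, B (ρ g v) (ρ g w) = B v w) (H : Subgroup G) (v : V) :
    B (subgroupAverage ρ H v) v = B (subgroupAverage ρ H v) (subgroupAverage ρ H v) := by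
  rw [← isSelfAdjoint_subgroupAverage hB,
    subgroupAverage_eq_self fun h hh ↦ apply_subgroupAverage ρ hh v]

end SubgroupAverage

section FixAverage

variable {k G α V V' W : Type*} [Field k] [Group G] [Finite G] [MulAction G α]
  [AddCommGroup V] [Module k V] [AddCommGroup V'] [Module k V'] [AddCommGroup W] [Module k W]

/-- The average of a representation over the pointwise stabilizer of `J`. -/
noncomputable def fixAverage (ρ : Representation k G V) (J : Finset α) : Module.End k V :=
  subgroupAverage ρ (fixingSubgroup G (J : Set α))

/-- A vector fixed by the pointwise stabilizer of `J` and killed by averaging over the pointwise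
stabilizer of any set smaller than `J`. For the symmetric group such vectors generate sums of Specht
modules whose shapes have exactly `|J|` boxes below the first row. -/
def IsPrimitive (ρ : Representation k G V) (J : Finset α) (u : V) : Prop :=
  (∀ g ∈ fixingSubgroup G (J : Set α), ρ g u = u) ∧
    ∀ K : Finset α, #K < #J → fixAverage ρ K u = 0

lemma fixAverage_univ [Fintype α] [FaithfulSMul G α] [CharZero k] (ρ : Representation k G V)
    (v : V) : fixAverage ρ (univ : Finset α) v = v := by
  refine subgroupAverage_eq_self fun g hg ↦ ?_
  have : g = 1 := FaithfulSMul.eq_of_smul_eq_smul fun a : α ↦ by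
    simpa using (mem_fixingSubgroup_iff G).mp hg a (by simp)
  rw [this, map_one, Module.End.one_apply]

variable {ρ : Representation k G V} {τ : Representation k G V'} {J : Finset α} {u : V}

lemma isPrimitive_zero (J : Finset α) : IsPrimitive ρ J 0 :=
  ⟨fun _ _ ↦ map_zero _, fun _ _ ↦ map_zero _⟩

lemma IsPrimitive.smul (c : k) (hu : IsPrimitive ρ J u) : IsPrimitive ρ J (c • u) :=
  ⟨fun g hg ↦ by rw [map_smul, hu.1 g hg], fun K hK ↦ by rw [map_smul, hu.2 K hK, smul_zero]⟩

lemma IsPrimitive.map (φ : ρ.IntertwiningMap τ) (hu : IsPrimitive ρ J u) : IsPrimitive τ J (φ u) :=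
  ⟨fun g hg ↦ by rw [← φ.isIntertwining, hu.1 g hg],
    fun K hK ↦ by rw [fixAverage, ← map_subgroupAverage, ← fixAverage, hu.2 K hK, map_zero]⟩

open scoped Pointwise in
lemma apply_fixAverage [DecidableEq α] (ρ : Representation k G V) (J : Finset α) (g : G) (v : V) :
    ρ g (fixAverage ρ J v) = fixAverage ρ (g • J) (ρ g v) := by
  rw [fixAverage, fixAverage, apply_subgroupAverage_conj, coe_smul_finset,
    SubMulAction.fixingSubgroup_smul_eq_fixingSubgroup_map_conj]

open scoped Pointwise in
lemma isPrimitive_fixAverage {v : V} (hv : ∀ K : Finset α, #K < #J → fixAverage ρ K v = 0) :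
    IsPrimitive ρ J (fixAverage ρ J v) := by
  classical
  refine ⟨fun g hg ↦ apply_subgroupAverage ρ hg v, fun K hK ↦ ?_⟩
  have killed (g : G) : fixAverage ρ K (ρ g v) = 0 := by
    have := apply_fixAverage ρ (g⁻¹ • K) g v
    rwa [smul_inv_smul, hv _ (by rwa [card_smul_finset]), map_zero, eq_comm] at this
  have := Fintype.ofFinite (fixingSubgroup G (J : Set α))
  refine (congrArg (fixAverage ρ K) (subgroupAverage_apply ρ v)).trans ?_
  rw [map_smul, map_sum, sum_eq_zero fun (g : fixingSubgroup G (J : Set α)) _ ↦ killed g, smul_zero]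

variable (α) [Fintype α]

/-- The sum of the averages over the pointwise stabilizers of all `m`-element subsets. These
operators are simultaneously diagonalizable, and their joint eigenvectors are used to split vectors
into primitive ones. -/
noncomputable def levelOperator (ρ : Representation k G V) (m : ℕ) : Module.End k V :=
  ∑ J : Finset α with #J = m, fixAverage ρ J

open scoped Pointwise in
lemma commute_levelOperator (ρ : Representation k G V) (g : G) (m : ℕ) :
    Commute (ρ g) (levelOperator α ρ m) := by
  classical
  refine LinearMap.ext fun v ↦ ?_
  simp only [Module.End.mul_apply, levelOperator, LinearMap.sum_apply, map_sum, apply_fixAverage]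
  exact sum_equiv (MulAction.toPerm g) (by simp) (by simp)

lemma commute_levelOperator_levelOperator (ρ : Representation k G V) (l m : ℕ) :
    Commute (levelOperator α ρ l) (levelOperator α ρ m) := by
  refine Commute.sum_left _ _ _ fun J _ ↦ Commute.smul_left ?_ _
  exact Commute.sum_left _ _ _ fun g _ ↦ commute_levelOperator α ρ g m

lemma isSelfAdjoint_levelOperator {B : V →ₗ[k] V →ₗ[k] W}
    (hB : ∀ g v w, B (ρ g v) (ρ g w) = B v w) (m : ℕ) : B.IsSelfAdjoint (levelOperator α ρ m) :=
  B.selfAdjointSubmodule.sum_mem fun _ _ ↦ isSelfAdjoint_subgroupAverage hB _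

lemma apply_levelOperator_self [CharZero k] {B : V →ₗ[k] V →ₗ[k] W}
    (hB : ∀ g v w, B (ρ g v) (ρ g w) = B v w) (m : ℕ) (v : V) :
    B (levelOperator α ρ m v) v =
      ∑ J : Finset α with #J = m, B (fixAverage ρ J v) (fixAverage ρ J v) := by
  simp only [levelOperator, LinearMap.sum_apply, map_sum]
  exact sum_congr rfl fun J _ ↦ apply_subgroupAverage_self hB _ v

/-- The joint eigenspace of all level operators with eigenvalues `χ`. -/
noncomputable def levelEigenspace (ρ : Representation k G V) (χ : ℕ → k) : Submodule k V :=
  ⨅ m, Module.End.eigenspace (levelOperator α ρ m) (χ m)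

variable {α} {B : V →ₗ[k] V →ₗ[k] W} {χ ψ : ℕ → k} {v w : V}

lemma levelOperator_of_mem_levelEigenspace (hv : v ∈ levelEigenspace α ρ χ) (m : ℕ) :
    levelOperator α ρ m v = χ m • v :=
  Module.End.mem_eigenspace_iff.mp ((Submodule.mem_iInf _).mp hv m)

lemma apply_eq_zero_of_mem_levelEigenspace (hB : ∀ g v w, B (ρ g v) (ρ g w) = B v w)
    (h : χ ≠ ψ) (hv : v ∈ levelEigenspace α ρ χ) (hw : w ∈ levelEigenspace α ρ ψ) : B v w = 0 := by
  obtain ⟨m, hm⟩ := Function.ne_iff.mp h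
  exact apply_eq_zero_of_mem_eigenspace (isSelfAdjoint_levelOperator α hB m) hm
    ((Submodule.mem_iInf _).mp hv m) ((Submodule.mem_iInf _).mp hw m)

end FixAverage

section PrimitiveSquares

variable {G V V' W : Type*} (α : Type*) [Group G] [Finite G] [MulAction G α]
  [AddCommGroup V] [Module ℝ V] [AddCommGroup V'] [Module ℝ V'] [AddCommGroup W] [Module ℝ W]

/-- The values `B u u` of a bilinear form at the primitive vectors `u` of a representation, of
which `B v v` is shown to be a finite sum for every `v` when `B` is invariant. -/
def primitiveSquares (ρ : Representation ℝ G V) (B : V →ₗ[ℝ] V →ₗ[ℝ] W) : Set W :=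
  {x | ∃ (J : Finset α) (u : V), IsPrimitive ρ J u ∧ B u u = x}

variable {ρ : Representation ℝ G V} {τ : Representation ℝ G V'} {B : V →ₗ[ℝ] V →ₗ[ℝ] W}

lemma smul_mem_primitiveSquares {c : ℝ} (hc : 0 ≤ c) {x : W} (hx : x ∈ primitiveSquares α ρ B) :
    c • x ∈ primitiveSquares α ρ B := by
  obtain ⟨J, u, hu, rfl⟩ := hx
  exact ⟨J, √c • u, hu.smul _, by simp [smul_smul, Real.mul_self_sqrt hc]⟩

lemma primitiveSquares_compl₁₂_subset (φ : τ.IntertwiningMap ρ) :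
    primitiveSquares α τ (B.compl₁₂ φ.toLinearMap φ.toLinearMap) ⊆ primitiveSquares α ρ B := by
  rintro _ ⟨J, u, hu, rfl⟩
  exact ⟨J, φ u, hu.map φ, rfl⟩

end PrimitiveSquares

section Isometric

variable {G α V W : Type*} [Group G] [Finite G] [MulAction G α] [Fintype α]
  [NormedAddCommGroup V] [InnerProductSpace ℝ V] [AddCommGroup W] [Module ℝ W]
  {ρ : Representation ℝ G V} {B : V →ₗ[ℝ] V →ₗ[ℝ] W}

lemma iSup_levelEigenspace [FiniteDimensional ℝ V]
    (hρ : ∀ g v w, inner ℝ (ρ g v) (ρ g w) = inner ℝ v w) :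
    ⨆ χ, levelEigenspace α ρ χ = ⊤ :=
  LinearMap.IsSymmetric.iSup_iInf_eq_top_of_commute
    (isSelfAdjoint_levelOperator (B := innerₗ V) α hρ)
    fun l m _ ↦ commute_levelOperator_levelOperator α ρ l m

lemma apply_self_mem_closure_primitiveSquares_of_mem_levelEigenspace [FaithfulSMul G α]
    (hρ : ∀ g v w, inner ℝ (ρ g v) (ρ g w) = inner ℝ v w)
    (hB : ∀ g v w, B (ρ g v) (ρ g w) = B v w) {χ : ℕ → ℝ} {v : V}
    (hv : v ∈ levelEigenspace α ρ χ) :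
    B v v ∈ AddSubmonoid.closure (primitiveSquares α ρ B) := by
  classical
  obtain rfl | hv0 := eq_or_ne v 0
  · simp
  obtain ⟨J, hJ, minimal⟩ := exists_min_image ({J | fixAverage ρ J v ≠ 0} : Finset (Finset α)) card
    ⟨univ, by simpa [fixAverage_univ] using hv0⟩
  have vanish (K : Finset α) (hK : #K < #J) : fixAverage ρ K v = 0 := by
    by_contra h
    exact hK.not_ge (minimal K (by simpa using h))
  have eigenvalue_pos : 0 < χ #J := by
    have norm_sq : χ #J * inner ℝ v v =
        ∑ K : Finset α with #K = #J, inner ℝ (fixAverage ρ K v) (fixAverage ρ K v) := by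
      rw [← real_inner_smul_left, ← levelOperator_of_mem_levelEigenspace hv]
      exact apply_levelOperator_self (B := innerₗ V) α hρ #J v
    refine pos_of_mul_pos_left (norm_sq.ge.trans_lt' ?_) real_inner_self_nonneg
    exact sum_pos' (fun K _ ↦ real_inner_self_nonneg)
      ⟨J, by simp, real_inner_self_pos.mpr (by simpa using hJ)⟩
  have expand : B v v =
      ∑ K : Finset α with #K = #J, (χ #J)⁻¹ • B (fixAverage ρ K v) (fixAverage ρ K v) := by
    rw [← smul_sum, ← apply_levelOperator_self α hB, levelOperator_of_mem_levelEigenspace hv,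
      map_smul, LinearMap.smul_apply, inv_smul_smul₀ eigenvalue_pos.ne']
  rw [expand]
  refine sum_mem fun K hK ↦ AddSubmonoid.subset_closure ?_
  refine smul_mem_primitiveSquares α (inv_nonneg.mpr eigenvalue_pos.le) ⟨K, _, ?_, rfl⟩
  exact isPrimitive_fixAverage fun L hL ↦ vanish L (by simpa [(mem_filter.mp hK).2] using hL)

omit [Fintype α] in
lemma apply_self_mem_closure_primitiveSquares_of_isometric [Finite α] [FaithfulSMul G α]
    [FiniteDimensional ℝ V] (hρ : ∀ g v w, inner ℝ (ρ g v) (ρ g w) = inner ℝ v w)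
    (hB : ∀ g v w, B (ρ g v) (ρ g w) = B v w) (v : V) :
    B v v ∈ AddSubmonoid.closure (primitiveSquares α ρ B) := by
  have := Fintype.ofFinite α
  obtain ⟨f, hf, rfl⟩ := (Submodule.mem_iSup_iff_exists_finsupp _ v).mp
    (iSup_levelEigenspace (α := α) hρ ▸ Submodule.mem_top)
  have diagonal : B (f.sum fun _ x ↦ x) (f.sum fun _ x ↦ x) = f.sum fun _ x ↦ B x x := by
    simp only [Finsupp.sum, map_sum, LinearMap.sum_apply]
    refine sum_congr rfl fun χ hχ ↦ sum_eq_single_of_mem χ hχ fun ψ _ hψ ↦ ?_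
    exact apply_eq_zero_of_mem_levelEigenspace hB hψ (hf ψ) (hf χ)
  rw [diagonal]
  exact sum_mem fun χ _ ↦
    apply_self_mem_closure_primitiveSquares_of_mem_levelEigenspace hρ hB (hf χ)

end Isometric

section RegularRepresentation

/-- The left regular representation of a finite group, on the Euclidean space `ℝ^G`. -/
noncomputable def euclideanRegularRep (G : Type*) [Group G] [Fintype G] :
    Representation ℝ G (EuclideanSpace ℝ G) where
  toFun g := (LinearIsometryEquiv.piLpCongrLeft 2 ℝ ℝ (Equiv.mulLeft g)).toLinearEquiv
  map_one' := by
    ext v i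
    exact congrArg v.ofLp <| show (1 : G)⁻¹ * i = i by simp
  map_mul' g h := by
    ext v i
    exact congrArg v.ofLp <| show (g * h)⁻¹ * i = h⁻¹ * (g⁻¹ * i) by simp [mul_assoc]

variable {G α V W : Type*} [Group G] [Fintype G]
  [AddCommGroup V] [Module ℝ V] [AddCommGroup W] [Module ℝ W]

lemma inner_euclideanRegularRep (g : G) (v w : EuclideanSpace ℝ G) :
    inner ℝ (euclideanRegularRep G g v) (euclideanRegularRep G g w) = inner ℝ v w :=
  (LinearIsometryEquiv.piLpCongrLeft 2 ℝ ℝ (Equiv.mulLeft g)).inner_map_map v w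

lemma euclideanRegularRep_basisFun (g h : G) :
    euclideanRegularRep G g (EuclideanSpace.basisFun G ℝ h) =
      EuclideanSpace.basisFun G ℝ (g * h) := by
  classical
  simp only [EuclideanSpace.basisFun_apply]
  exact EuclideanSpace.piLpCongrLeft_single (𝕜 := ℝ) (Equiv.mulLeft g) h (1 : ℝ)

/-- The orbit map of a vector `v`, extending `g ↦ ρ g v` linearly. -/
noncomputable def orbitMap (ρ : Representation ℝ G V) (v : V) :
    (euclideanRegularRep G).IntertwiningMap ρ where
  toLinearMap := (EuclideanSpace.basisFun G ℝ).toBasis.constr ℝ fun g ↦ ρ g v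
  isIntertwining' g := (EuclideanSpace.basisFun G ℝ).toBasis.ext fun h ↦ by
    have image (x : G) := (EuclideanSpace.basisFun G ℝ).toBasis.constr_basis ℝ (fun g ↦ ρ g v) x
    simp only [OrthonormalBasis.coe_toBasis] at image
    simp [euclideanRegularRep_basisFun, image]

lemma orbitMap_basisFun_one (ρ : Representation ℝ G V) (v : V) :
    orbitMap ρ v (EuclideanSpace.basisFun G ℝ 1) = v := by
  rw [← OrthonormalBasis.coe_toBasis]
  exact ((EuclideanSpace.basisFun G ℝ).toBasis.constr_basis ℝ (fun g ↦ ρ g v) 1).trans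
    (LinearMap.congr_fun (map_one ρ) v)

omit [Fintype G] in
theorem apply_self_mem_closure_primitiveSquares [Finite G] [MulAction G α] [Finite α]
    [FaithfulSMul G α] {ρ : Representation ℝ G V} {B : V →ₗ[ℝ] V →ₗ[ℝ] W}
    (hB : ∀ g v w, B (ρ g v) (ρ g w) = B v w) (v : V) :
    B v v ∈ AddSubmonoid.closure (primitiveSquares α ρ B) := by
  have := Fintype.ofFinite G
  let φ := orbitMap ρ v
  have pulled_back := apply_self_mem_closure_primitiveSquares_of_isometric (α := α)
    (B := B.compl₁₂ φ.toLinearMap φ.toLinearMap) inner_euclideanRegularRep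
    (fun g a b ↦ by simp [φ.isIntertwining, hB]) (EuclideanSpace.basisFun G ℝ 1)
  simp only [LinearMap.compl₁₂_apply, φ,
    Representation.IntertwiningMap.coe_toLinearMap, orbitMap_basisFun_one] at pulled_back
  exact AddSubmonoid.closure_mono (primitiveSquares_compl₁₂_subset α φ) pulled_back

omit [Fintype G] in
theorem exists_isPrimitive_sum_eq [Finite G] [MulAction G α] [Finite α] [FaithfulSMul G α]
    {ρ : Representation ℝ G V} {B : V →ₗ[ℝ] V →ₗ[ℝ] W}
    (hB : ∀ g v w, B (ρ g v) (ρ g w) = B v w) (S : Subrepresentation ρ) {v : V} (hv : v ∈ S) :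
    ∃ (m : ℕ) (J : Fin m → Finset α) (u : Fin m → V),
      (∀ t, IsPrimitive ρ (J t) (u t)) ∧ (∀ t, u t ∈ S) ∧ B v v = ∑ t, B (u t) (u t) := by
  let ι : S.toRepresentation.IntertwiningMap ρ := ⟨S.toSubmodule.subtype, fun _ ↦ rfl⟩
  obtain ⟨l, hl, sum_eq⟩ := AddSubmonoid.exists_list_of_mem_closure <|
    apply_self_mem_closure_primitiveSquares (α := α) (ρ := S.toRepresentation)
      (B := B.compl₁₂ ι.toLinearMap ι.toLinearMap) (fun g a b ↦ by simp [ι.isIntertwining, hB])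
      ⟨v, hv⟩
  choose J u primitive value using fun t : Fin l.length ↦ hl (l.get t) (l.get_mem t)
  refine ⟨l.length, J, fun t ↦ ι (u t), fun t ↦ (primitive t).map ι, fun t ↦ (u t).2, ?_⟩
  calc
    B v v = l.sum := sum_eq.symm
    _ = ∑ t, l.get t := by rw [← List.sum_ofFn, List.ofFn_get]
    _ = ∑ t, B (ι (u t)) (ι (u t)) := sum_congr rfl fun t _ ↦ (value t).symm

end RegularRepresentation

section Polynomials

variable {n : ℕ}

lemma permIdx_one : permIdx (1 : Equiv.Perm (Fin n)) = id :=
  funext fun _ ↦ Subtype.ext image_id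

lemma permIdx_mul (σ τ : Equiv.Perm (Fin n)) : permIdx (σ * τ) = permIdx σ ∘ permIdx τ :=
  funext fun _ ↦ Subtype.ext <| by
    simp only [permIdx, Function.comp_apply, image_image, Equiv.Perm.coe_mul]

lemma permIdx_injective (σ : Equiv.Perm (Fin n)) : Function.Injective (permIdx σ) :=
  Function.LeftInverse.injective (g := permIdx σ⁻¹) fun e ↦ by
    rw [← Function.comp_apply (f := permIdx σ⁻¹), ← permIdx_mul, inv_mul_cancel, permIdx_one, id]

/-- The indices of a monomial: the union of the sets `e` such that `x_e` divides it. -/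
def monomialIndices (d : VIdx n →₀ ℕ) : Finset (Fin n) :=
  d.support.biUnion fun e ↦ (e : Finset (Fin n))

lemma monomialIndices_mapDomain (σ : Equiv.Perm (Fin n)) (d : VIdx n →₀ ℕ) :
    monomialIndices (d.mapDomain (permIdx σ)) = (monomialIndices d).image σ := by
  rw [monomialIndices, Finsupp.mapDomain_support_of_injective (permIdx_injective σ),
    image_biUnion, monomialIndices, biUnion_image]
  rfl

lemma mapDomain_permIdx_eq_self {σ : Equiv.Perm (Fin n)} {d : VIdx n →₀ ℕ}
    (hσ : ∀ i ∈ monomialIndices d, σ i = i) : d.mapDomain (permIdx σ) = d := by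
  have fixed (e : VIdx n) (he : e ∈ d.support) : permIdx σ e = id e :=
    Subtype.ext <| (image_congr fun i hi ↦ hσ i (mem_biUnion.mpr ⟨e, he, hi⟩)).trans image_id
  rw [Finsupp.mapDomain_congr fixed, Finsupp.mapDomain_id]

/-- The action of `Sₙ` on polynomials by `x_e ↦ x_{σ(e)}`. -/
noncomputable def permRep (n : ℕ) :
    Representation ℝ (Equiv.Perm (Fin n)) (MvPolynomial (VIdx n) ℝ) where
  toFun σ := (rename (permIdx σ)).toLinearMap
  map_one' := by ext; simp [permIdx_one]
  map_mul' σ τ := LinearMap.ext fun p ↦ by simp [permIdx_mul, rename_rename]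

lemma permRep_apply (σ : Equiv.Perm (Fin n)) (p : MvPolynomial (VIdx n) ℝ) :
    permRep n σ p = rename (permIdx σ) p := rfl

/-- The subrepresentation of polynomials of index degree at most `d`. -/
noncomputable def indexDegLE (n d : ℕ) : Subrepresentation (permRep n) where
  toSubmodule := restrictSupport ℝ {m | #(monomialIndices m) ≤ d}
  apply_mem_toSubmodule σ p hp m hm := by
    obtain ⟨m', rfl, hm'⟩ := coeff_rename_ne_zero _ _ _ (mem_support_iff.mp hm)
    rw [Set.mem_ofPred_eq, monomialIndices_mapDomain, card_image_of_injective _ σ.injective]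
    exact hp (mem_support_iff.mpr hm')

lemma mem_indexDegLE {d : ℕ} {p : MvPolynomial (VIdx n) ℝ} :
    p ∈ indexDegLE n d ↔ indexDeg p ≤ d := by
  rw [indexDeg, Finset.sup_le_iff]
  rfl

lemma coeff_fixAverage_monomialIndices (p : MvPolynomial (VIdx n) ℝ) (m : VIdx n →₀ ℕ) :
    coeff m (fixAverage (permRep n) (monomialIndices m) p) = coeff m p := by
  have fixed (σ : fixingSubgroup (Equiv.Perm (Fin n)) (monomialIndices m : Set (Fin n))) :
      coeff m (permRep n σ p) = coeff m p := by
    have := coeff_rename_mapDomain _ (permIdx_injective (σ : Equiv.Perm (Fin n))) p m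
    rwa [mapDomain_permIdx_eq_self fun i hi ↦ (mem_fixingSubgroup_iff _).mp σ.2 i hi] at this
  have := Fintype.ofFinite (fixingSubgroup (Equiv.Perm (Fin n)) (monomialIndices m : Set (Fin n)))
  rw [fixAverage, subgroupAverage_apply, coeff_smul, coeff_sum, sum_congr rfl fun σ _ ↦ fixed σ]
  simp

lemma IsPrimitive.card_le_indexDeg {J : Finset (Fin n)} {p : MvPolynomial (VIdx n) ℝ}
    (hp : IsPrimitive (permRep n) J p) (hp0 : p ≠ 0) : #J ≤ indexDeg p := by
  obtain ⟨m, hm⟩ := support_nonempty.mpr hp0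
  by_contra! h
  refine mem_support_iff.mp hm ?_
  rw [← coeff_fixAverage_monomialIndices, hp.2 _ (h.trans_le' ?_), coeff_zero]
  exact le_sup (f := fun m ↦ #(monomialIndices m)) hm

lemma IsPrimitive.sum_rename_eq_zero {J : Finset (Fin n)} {p : MvPolynomial (VIdx n) ℝ}
    (hp : IsPrimitive (permRep n) J p) {i : Fin n} (hi : i ∈ J) :
    ∑ σ ∈ univ.filter (fun σ : Equiv.Perm (Fin n) => ∀ j ∈ J.erase i, σ j = j),
      rename (permIdx σ) p = 0 := by
  let K : Subgroup (Equiv.Perm (Fin n)) := fixingSubgroup _ (J.erase i : Set (Fin n))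
  have := Fintype.ofFinite K
  calc
    _ = ∑ σ : K, permRep n σ p :=
      sum_subtype _ (fun σ ↦ by simp [K, mem_fixingSubgroup_iff, imp.swap]) fun σ ↦ permRep n σ p
    _ = (Nat.card K : ℝ) • fixAverage (permRep n) (J.erase i) p :=
      (card_smul_subgroupAverage _ p).symm
    _ = 0 := by rw [hp.2 _ (card_erase_lt_of_mem hi), smul_zero]

lemma IsPrimitive.exists_card_le_indexDeg {J : Finset (Fin n)} {p : MvPolynomial (VIdx n) ℝ}
    (hp : IsPrimitive (permRep n) J p) :
    ∃ I : Finset (Fin n), #I ≤ indexDeg p ∧ IsPrimitive (permRep n) I p := by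
  obtain rfl | hp0 := eq_or_ne p 0
  · exact ⟨∅, Nat.zero_le _, isPrimitive_zero ∅⟩
  · exact ⟨J, hp.card_le_indexDeg hp0, hp⟩

end Polynomials

theorem symmetric_square_decomposition_general {W : Type*} [AddCommGroup W] [Module ℝ W] (n : ℕ)
    (E : MvPolynomial (VIdx n) ℝ →ₗ[ℝ] W)
    (hsym : ∀ (σ : Equiv.Perm (Fin n)) (p : MvPolynomial (VIdx n) ℝ),
      E (rename (permIdx σ) p) = E p)
    (g : MvPolynomial (VIdx n) ℝ) :
    ∃ (m : ℕ) (I : Fin m → Finset (Fin n)) (gs : Fin m → MvPolynomial (VIdx n) ℝ),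
      (∀ t, (I t).card ≤ indexDeg g) ∧
      (∀ t (σ : Equiv.Perm (Fin n)), (∀ i ∈ I t, σ i = i) →
        rename (permIdx σ) (gs t) = gs t) ∧
      (∀ t, indexDeg (gs t) ≤ indexDeg g) ∧
      (∀ t, ∀ i ∈ I t,
        ∑ σ ∈ univ.filter (fun σ : Equiv.Perm (Fin n) => ∀ j ∈ (I t).erase i, σ j = j),
          rename (permIdx σ) (gs t) = 0) ∧
      E (g ^ 2) = ∑ t, E (gs t ^ 2) := by
  let B := (LinearMap.mul ℝ (MvPolynomial (VIdx n) ℝ)).compr₂ E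
  have hB (σ : Equiv.Perm (Fin n)) (p q : MvPolynomial (VIdx n) ℝ) :
      B (permRep n σ p) (permRep n σ q) = B p q := by
    simp [B, permRep_apply, ← map_mul, hsym]
  obtain ⟨m, J, gs, primitive, degree_le, sum_eq⟩ :=
    exists_isPrimitive_sum_eq (α := Fin n) hB (indexDegLE n (indexDeg g))
      (mem_indexDegLE.mpr le_rfl)
  choose I card_le primitive using fun t ↦ (primitive t).exists_card_le_indexDeg
  have degree_le (t : Fin m) : indexDeg (gs t) ≤ indexDeg g := mem_indexDegLE.mp (degree_le t)
  refine ⟨m, I, gs, fun t ↦ (card_le t).trans (degree_le t), fun t σ hσ ↦ ?_, degree_le,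
    fun t _ hi ↦ (primitive t).sum_rename_eq_zero hi, by simpa [B, sq] using sum_eq⟩
  exact (primitive t).1 σ ((mem_fixingSubgroup_iff _).mpr hσ)

theorem symmetric_square_decomposition (n : ℕ) (hn : 0 < n)
    (E : MvPolynomial (VIdx n) ℝ →ₗ[ℝ] ℝ)
    (hsym : ∀ (σ : Equiv.Perm (Fin n)) (p : MvPolynomial (VIdx n) ℝ),
      E (rename (permIdx σ) p) = E p)
    (g : MvPolynomial (VIdx n) ℝ) (hg : 2 * indexDeg g ≤ n) :
    ∃ (m : ℕ) (I : Fin m → Finset (Fin n)) (gs : Fin m → MvPolynomial (VIdx n) ℝ),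
      (∀ t, (I t).card ≤ indexDeg g) ∧
      (∀ t (σ : Equiv.Perm (Fin n)), (∀ i ∈ I t, σ i = i) →
        rename (permIdx σ) (gs t) = gs t) ∧
      (∀ t, indexDeg (gs t) ≤ indexDeg g) ∧
      (∀ t, ∀ i ∈ I t,
        ∑ σ ∈ univ.filter (fun σ : Equiv.Perm (Fin n) => ∀ j ∈ (I t).erase i, σ j = j),
          rename (permIdx σ) (gs t) = 0) ∧
      E (g ^ 2) = ∑ t, E (gs t ^ 2) :=
  symmetric_square_decomposition_general n E hsym g
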